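/- For every b > 0, the function f_b : ℝ → ℝ defined by f_b(x) = −exp(−b/(1−x)) for x < 1 and f_b(x) = 0 for x ≥ 1 is of class C^∞ on ℝ; moreover, there exists b₀ > 0 such that for every b ≥ b₀ one has f_b'(x) > 0, f_b''(x) < 0, f_b'''(x) > 0 and f_b⁽⁴⁾(x) < 0 for every x with 0 ≤ x < 1. -/

import Mathlib

/-- Aubin's explicit cutoff profile: `f_b x = -exp (-b/(1-x))` for `x < 1`, and `0` for `x ≥ 1`. -/
noncomputable def aubinProfile (b : ℝ) : ℝ → ℝ :=
  fun x => if x < 1 then -Real.exp (-b / (1 - x)) else 0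

/-!
For `b > 0`, `f_b x = -g ((1 - x) / b)` with `g = expNegInvGlue`, so `f_b` is smooth and
`(-1) ^ (n + 1) f_b⁽ⁿ⁾(x)` is a positive multiple of `g⁽ⁿ⁾((1 - x) / b)`. Inductively
`g⁽ⁿ⁾(t) = Pₙ(1 / t) g(t)` with `Pₙ` monic, hence all `g⁽ⁿ⁾` with `n ≤ N` are positive at every
`t > 0` for which `1 / t` is large enough, and `1 / t = b / (1 - x) ≥ b` when `0 ≤ x < 1`.
-/

open Filter Polynomial
open scoped ContDiff

theorem eventually_eval_pos_of_leadingCoeff_pos {𝕜 : Type*} [NormedField 𝕜] [LinearOrder 𝕜]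
    [IsStrictOrderedRing 𝕜] [OrderTopology 𝕜] {p : 𝕜[X]} (hp : 0 < p.leadingCoeff) :
    ∀ᶠ s in atTop, 0 < p.eval s := by
  by_cases hdeg : 0 < p.degree
  · exact (p.tendsto_atTop_of_leadingCoeff_nonneg hdeg hp.le).eventually_gt_atTop 0
  · rw [eq_C_of_degree_le_zero (not_lt.mp hdeg)] at hp ⊢
    simpa only [eval_C, leadingCoeff_C] using Eventually.of_forall fun _ ↦ hp

theorem monic_X_sq_mul_sub_derivative {R : Type*} [Ring R] {p : R[X]} (hp : p.Monic) :
    (X ^ 2 * (p - derivative p)).Monic := by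
  nontriviality R
  exact (monic_X_pow 2).mul (hp.sub_of_left (degree_derivative_lt hp.ne_zero))

/-- The polynomials `Pₙ` with `g⁽ⁿ⁾(t) = Pₙ(t⁻¹) * g t` for `g = expNegInvGlue`; the recursion
differentiates this formula, using `g'(t) = t⁻¹ ^ 2 * g t` for `t > 0`. -/
noncomputable def expNegInvGlueDerivPoly : ℕ → ℝ[X]
  | 0 => 1
  | n + 1 => X ^ 2 * (expNegInvGlueDerivPoly n - derivative (expNegInvGlueDerivPoly n))

theorem monic_expNegInvGlueDerivPoly (n : ℕ) : (expNegInvGlueDerivPoly n).Monic := by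
  induction n with
  | zero => exact monic_one
  | succ n ih => exact monic_X_sq_mul_sub_derivative ih

theorem iteratedDeriv_expNegInvGlue (n : ℕ) :
    iteratedDeriv n expNegInvGlue =
      fun t ↦ (expNegInvGlueDerivPoly n).eval t⁻¹ * expNegInvGlue t := by
  induction n with
  | zero => simp [expNegInvGlueDerivPoly]
  | succ n ih =>
    rw [iteratedDeriv_succ, ih]
    exact funext fun t ↦ (expNegInvGlue.hasDerivAt_polynomial_eval_inv_mul _ t).deriv

theorem eventually_iteratedDeriv_expNegInvGlue_inv_pos (n : ℕ) :
    ∀ᶠ s : ℝ in atTop, 0 < iteratedDeriv n expNegInvGlue s⁻¹ := by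
  have hlead : 0 < (expNegInvGlueDerivPoly n).leadingCoeff := by
    simp [(monic_expNegInvGlueDerivPoly n).leadingCoeff]
  filter_upwards [eventually_eval_pos_of_leadingCoeff_pos hlead, eventually_gt_atTop 0] with s hP hs
  simp only [iteratedDeriv_expNegInvGlue, inv_inv]
  exact mul_pos hP (expNegInvGlue.pos_of_pos (inv_pos.mpr hs))

section Profile

variable {b : ℝ}

theorem aubinProfile_eq_neg_expNegInvGlue (hb : 0 < b) :
    aubinProfile b = fun x ↦ -expNegInvGlue (b⁻¹ * (1 - x)) := by
  funext x
  rcases lt_or_ge x 1 with hx | hx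
  · have harg : 0 < b⁻¹ * (1 - x) := mul_pos (inv_pos.mpr hb) (sub_pos.mpr hx)
    simp [aubinProfile, expNegInvGlue, hx, harg.not_ge, div_eq_inv_mul, mul_comm]
  · have harg : b⁻¹ * (1 - x) ≤ 0 :=
      mul_nonpos_of_nonneg_of_nonpos (inv_nonneg.mpr hb.le) (sub_nonpos.mpr hx)
    simp [aubinProfile, hx.not_gt, expNegInvGlue.zero_of_nonpos harg]

theorem contDiff_aubinProfile (hb : 0 < b) : ContDiff ℝ ∞ (aubinProfile b) := by
  rw [aubinProfile_eq_neg_expNegInvGlue hb]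
  fun_prop

theorem iteratedDeriv_aubinProfile (hb : 0 < b) (n : ℕ) (x : ℝ) :
    iteratedDeriv n (aubinProfile b) x =
      (-1) ^ (n + 1) * (b⁻¹ ^ n * iteratedDeriv n expNegInvGlue (b⁻¹ * (1 - x))) := by
  have hscale : iteratedDeriv n (fun y ↦ expNegInvGlue (b⁻¹ * y)) =
      fun y ↦ b⁻¹ ^ n * iteratedDeriv n expNegInvGlue (b⁻¹ * y) :=
    iteratedDeriv_comp_const_mul expNegInvGlue.contDiff b⁻¹
  have hreflect := iteratedDeriv_comp_const_sub n (fun y ↦ expNegInvGlue (b⁻¹ * y)) (1 : ℝ)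
  rw [aubinProfile_eq_neg_expNegInvGlue hb, iteratedDeriv_fun_neg, hreflect, hscale]
  simp only [smul_eq_mul]
  ring

theorem neg_one_pow_mul_iteratedDeriv_aubinProfile_pos_iff (hb : 0 < b) (n : ℕ) (x : ℝ) :
    0 < (-1) ^ (n + 1) * iteratedDeriv n (aubinProfile b) x ↔
      0 < iteratedDeriv n expNegInvGlue (b / (1 - x))⁻¹ := by
  rw [iteratedDeriv_aubinProfile hb, ← mul_assoc, ← mul_pow, neg_one_mul, neg_neg, one_pow,
    one_mul, mul_pos_iff_of_pos_left (pow_pos (inv_pos.mpr hb) n), inv_div, div_eq_inv_mul]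

end Profile

theorem aubinProfile_smooth_and_sign_conditions_general :
    (∀ b : ℝ, 0 < b → ContDiff ℝ ∞ (aubinProfile b)) ∧
    ∀ N : ℕ, ∃ b₀ : ℝ, 0 < b₀ ∧ ∀ b x : ℝ, x < 1 → b₀ * (1 - x) ≤ b → ∀ n ≤ N,
      0 < (-1) ^ (n + 1) * iteratedDeriv n (aubinProfile b) x := by
  refine ⟨fun b hb ↦ contDiff_aubinProfile hb, fun N ↦ ?_⟩
  have hev : ∀ᶠ s : ℝ in atTop, ∀ n ≤ N, 0 < iteratedDeriv n expNegInvGlue s⁻¹ :=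
    (eventually_all_finite (Set.finite_Iic N)).mpr fun n _ ↦
      eventually_iteratedDeriv_expNegInvGlue_inv_pos n
  obtain ⟨b₀, hb₀, hpos⟩ :=
    ((eventually_gt_atTop 0).and (eventually_forall_ge_atTop.mpr hev)).exists
  refine ⟨b₀, hb₀, fun b x hx hbx n hn ↦ ?_⟩
  have hx' : 0 < 1 - x := sub_pos.mpr hx
  have hb : 0 < b := (mul_pos hb₀ hx').trans_le hbx
  exact (neg_one_pow_mul_iteratedDeriv_aubinProfile_pos_iff hb n x).mpr
    (hpos (b / (1 - x)) ((le_div_iff₀ hx').mpr hbx) n hn)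

/-- For every `b > 0` the function `f_b` is `C^∞` on `ℝ`, and there is `b₀ > 0` such that
for every `b ≥ b₀` the first four derivatives of `f_b` satisfy `f' > 0`, `f'' < 0`,
`f''' > 0`, `f⁗ < 0` on `[0, 1)`. -/
theorem aubinProfile_smooth_and_sign_conditions :
    (∀ b : ℝ, 0 < b → ContDiff ℝ (⊤ : ℕ∞) (aubinProfile b)) ∧
    ∃ b₀ : ℝ, 0 < b₀ ∧ ∀ b : ℝ, b₀ ≤ b → ∀ x : ℝ, 0 ≤ x → x < 1 →
      0 < iteratedDeriv 1 (aubinProfile b) x ∧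
      iteratedDeriv 2 (aubinProfile b) x < 0 ∧
      0 < iteratedDeriv 3 (aubinProfile b) x ∧
      iteratedDeriv 4 (aubinProfile b) x < 0 := by
  obtain ⟨hsmooth, hsign⟩ := aubinProfile_smooth_and_sign_conditions_general
  obtain ⟨b₀, hb₀, h⟩ := hsign 4
  refine ⟨hsmooth, b₀, hb₀, fun b hb x hx₀ hx₁ ↦ ?_⟩
  have hsigns := h b x hx₁ ((mul_le_of_le_one_right hb₀.le (by linarith)).trans hb)
  exact ⟨by simpa using hsigns 1 (by simp), by simpa [pow_succ] using hsigns 2 (by simp),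
    by simpa [pow_succ] using hsigns 3 (by simp), by simpa [pow_succ] using hsigns 4 (by simp)⟩
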